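/- Let α, β be coprime positive integers and n ≥ 0. For every i ≥ 0, the number of indices j with i ≤ j < i + α + β such that the factor of length n of w_{α,β}^ω starting at position j (positions counted from 0) is heavy equals nβ mod (α+β). Equivalently, every factor u of w_{α,β}^ω of length α+β+n−1 contains exactly nβ mod (α+β) occurrences of heavy factors of length n. -/

import Mathlib

/-- The lower Christoffel word `w_{a,b}`: the binary word of length `a+b` whose
`k`-th letter (1-based) is `⌊kb/(a+b)⌋ - ⌊(k-1)b/(a+b)⌋` (with `false = 0`, `true = 1`). -/
def lowerChristoffel (a b : ℕ) : List Bool :=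
  (List.range (a + b)).map fun i => decide ((i + 1) * b / (a + b) ≠ i * b / (a + b))

/-- The upper Christoffel word `W_{a,b}`: the binary word of length `a+b` whose
`k`-th letter is `⌈kb/(a+b)⌉ - ⌈(k-1)b/(a+b)⌉`. -/
def upperChristoffel (a b : ℕ) : List Bool :=
  (List.range (a + b)).map fun i =>
    decide (((i + 1) * b + (a + b) - 1) / (a + b) ≠ (i * b + (a + b) - 1) / (a + b))

/-- `p` is a period of `w`: `p` is positive and `w_i = w_{i+p}` for all valid indices. -/
def HasPeriod (w : List Bool) (p : ℕ) : Prop :=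
  0 < p ∧ ∀ i, i + p < w.length → w.getD i false = w.getD (i + p) false

/-- A central word: a binary word with two coprime periods `p`, `q` and length `p + q - 2`. -/
def IsCentral (w : List Bool) : Prop :=
  ∃ p q : ℕ, Nat.Coprime p q ∧ HasPeriod w p ∧ HasPeriod w q ∧ w.length + 2 = p + q

/-- A binary word is balanced if any two factors of the same length have numbers of `1`s
differing by at most `1`. -/
def BalancedWord (w : List Bool) : Prop :=
  ∀ u v : List Bool, u <:+: w → v <:+: w → u.length = v.length →
    |(u.count true : ℤ) - (v.count true : ℤ)| ≤ 1

/-- `w^m`: the `m`-th power of the word `w`. -/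
def wpow (w : List Bool) (m : ℕ) : List Bool := (List.replicate m w).flatten

/-- A word is primitive if it is not a proper power. -/
def IsPrimitiveWord (w : List Bool) : Prop := ¬ ∃ (v : List Bool) (m : ℕ), 2 ≤ m ∧ w = wpow v m

/-- A Lyndon word: a nonempty primitive word lexicographically strictly smaller than all
of its proper nonempty suffixes (for the order `0 < 1`, i.e. `false < true`). -/
def IsLyndonWord (w : List Bool) : Prop :=
  w ≠ [] ∧ IsPrimitiveWord w ∧
    ∀ u v : List Bool, w = u ++ v → u ≠ [] → v ≠ [] → List.Lex (· < ·) w v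

/-- `p` is the minimal period of `w`. -/
def IsMinPeriod (w : List Bool) (p : ℕ) : Prop :=
  HasPeriod w p ∧ ∀ q : ℕ, HasPeriod w q → p ≤ q

/-- `u` is a factor of the infinite periodic word `w^ω`. -/
def IsOmegaFactor (u w : List Bool) : Prop := ∃ m : ℕ, u <:+: wpow w m

/-- A primitive Christoffel word: a lower or upper Christoffel word `w_{a,b}` with
`gcd(a,b) = 1`. -/
def IsPrimitiveChristoffel (c : List Bool) : Prop :=
  ∃ a b : ℕ, Nat.Coprime a b ∧ (c = lowerChristoffel a b ∨ c = upperChristoffel a b)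

/-- The factor of length `n` of `w^ω` starting at position `j` (positions from 0). -/
def omegaFactorAt (w : List Bool) (j n : ℕ) : List Bool :=
  (List.range n).map fun t => w.getD ((j + t) % w.length) false

/-!
As `j` runs over a period of `w^ω`, each of the `n` letters of the factor of length `n` at `j` runs
over a full period, so the numbers of `1`s in these factors add up to `n |w|₁`. If each of them is
`q` or `q + 1`, then the value `q + 1` is taken exactly `n |w|₁ - q |w|` times. For `w = w_{a,b}`
the count of `1`s telescopes to a difference of floors, so `q = ⌊n b / (a + b)⌋` works, and since
`|w|₁ = b` the difference is `n b mod (a + b)`.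
-/

open Finset

theorem sum_Ico_eq_sum_range_of_periodic {M : Type*} [AddCommMonoid M] {f : ℕ → M} {c : ℕ}
    (hf : Function.Periodic f c) (i : ℕ) : ∑ j ∈ Ico i (i + c), f j = ∑ j ∈ range c, f j := by
  rw [← Nat.image_Ico_mod i c, sum_image (Nat.mod_injOn_Ico i c)]
  simp only [hf.map_mod_nat]

theorem card_filter_eq_succ_add_card_mul {ι : Type*} {s : Finset ι} {f : ι → ℕ} {q : ℕ}
    (hf : ∀ x ∈ s, f x = q ∨ f x = q + 1) :
    #{x ∈ s | f x = q + 1} + #s * q = ∑ x ∈ s, f x := by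
  rw [card_filter, ← smul_eq_mul, ← sum_const, ← sum_add_distrib]
  refine sum_congr rfl fun x hx => ?_
  rcases hf x hx with h | h <;> simp [h, add_comm]

section OmegaWord

/-- The letter of the infinite periodic word `w^ω` at position `j`, counted from `0`
(constantly `false` when `w` is empty). It presents `w^ω` as a sequence, of which
`omegaFactorAt` gives the finite windows. -/
def omegaLetter (w : List Bool) (j : ℕ) : Bool := w.getD (j % w.length) false

variable (w : List Bool)

theorem periodic_omegaLetter : Function.Periodic (omegaLetter w) w.length := fun j => by
  simp only [omegaLetter, Nat.add_mod_right]

theorem omegaFactorAt_eq_map_range' (j n : ℕ) :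
    omegaFactorAt w j n = (List.range' j n).map (omegaLetter w) := by
  rw [List.range'_eq_map_range, List.map_map]
  rfl

theorem length_omegaFactorAt (j n : ℕ) : (omegaFactorAt w j n).length = n := by
  simp [omegaFactorAt]

theorem omegaFactorAt_add (j m n : ℕ) :
    omegaFactorAt w j (m + n) = omegaFactorAt w j m ++ omegaFactorAt w (j + m) n := by
  simp only [omegaFactorAt_eq_map_range', ← List.map_append, List.range'_append_1]

theorem omegaFactorAt_length_add (j n : ℕ) :
    omegaFactorAt w (w.length + j) n = omegaFactorAt w j n := by
  simp only [omegaFactorAt, add_assoc, Nat.add_mod_left]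

theorem take_drop_omegaFactorAt {j n m : ℕ} (h : j + n ≤ m) (s : ℕ) :
    ((omegaFactorAt w s m).drop j).take n = omegaFactorAt w (s + j) n := by
  rw [omegaFactorAt_eq_map_range', ← List.map_drop, ← List.map_take, List.drop_range',
    List.take_range'_of_length_ge (by omega), mul_one, omegaFactorAt_eq_map_range']

theorem omegaFactorAt_zero_length : omegaFactorAt w 0 w.length = w := by
  refine List.ext_getElem (length_omegaFactorAt w 0 w.length) fun k _ hk => ?_
  simp [omegaFactorAt, Nat.mod_eq_of_lt hk, hk]

theorem wpow_eq_omegaFactorAt (m : ℕ) : wpow w m = omegaFactorAt w 0 (w.length * m) := by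
  induction m with
  | zero => rfl
  | succ m ih =>
    calc wpow w (m + 1)
      _ = w ++ wpow w m := by simp only [wpow, List.replicate_succ, List.flatten_cons]
      _ = omegaFactorAt w 0 w.length ++ omegaFactorAt w (0 + w.length) (w.length * m) := by
        rw [omegaFactorAt_zero_length, ih, add_comm, omegaFactorAt_length_add]
      _ = omegaFactorAt w 0 (w.length * (m + 1)) := by
        rw [← omegaFactorAt_add, Nat.mul_succ, add_comm]

variable {w} in
theorem IsOmegaFactor.exists_eq_omegaFactorAt {u : List Bool} (hu : IsOmegaFactor u w) :
    ∃ s, u = omegaFactorAt w s u.length := by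
  obtain ⟨m, x, y, hxy⟩ := hu
  have hlen : x.length + u.length ≤ w.length * m := by
    have := congrArg List.length hxy
    rw [wpow_eq_omegaFactorAt, length_omegaFactorAt] at this
    simp only [List.length_append] at this
    omega
  refine ⟨0 + x.length, ?_⟩
  rw [← take_drop_omegaFactorAt w hlen, ← wpow_eq_omegaFactorAt, ← hxy, List.append_assoc,
    List.drop_left, List.take_left]

variable {w} in
theorem IsOmegaFactor.exists_card_filter_take_drop {u : List Bool} (hu : IsOmegaFactor u w)
    {n : ℕ} (hlen : u.length = w.length + n - 1) (p : List Bool → Prop) [DecidablePred p] :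
    ∃ s, #{j ∈ range w.length | p ((u.drop j).take n)} =
      #{j ∈ Ico s (s + w.length) | p (omegaFactorAt w j n)} := by
  obtain ⟨s, hs⟩ := hu.exists_eq_omegaFactorAt
  refine ⟨s, ?_⟩
  rw [card_filter, card_filter, sum_Ico_eq_sum_range, Nat.add_sub_cancel_left]
  refine sum_congr rfl fun j hj => ?_
  have hjn : j + n ≤ u.length := by
    have := mem_range.mp hj
    omega
  rw [hs, take_drop_omegaFactorAt w hjn]

theorem count_true_omegaFactorAt_succ (j n : ℕ) :
    (omegaFactorAt w j (n + 1)).count true =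
      (omegaFactorAt w j n).count true + (omegaLetter w (j + n)).toNat := by
  rw [omegaFactorAt_add, List.count_append, omegaFactorAt_eq_map_range' w (j + n) 1]
  cases h : omegaLetter w (j + n) <;> simp [h]

theorem count_true_omegaFactorAt (j n : ℕ) :
    (omegaFactorAt w j n).count true = ∑ t ∈ range n, (omegaLetter w (j + t)).toNat := by
  induction n with
  | zero => rfl
  | succ n ih => rw [count_true_omegaFactorAt_succ, ih, sum_range_succ]

theorem sum_Ico_toNat_omegaLetter (i : ℕ) :
    ∑ j ∈ Ico i (i + w.length), (omegaLetter w j).toNat = w.count true := by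
  have hper : Function.Periodic (fun j => (omegaLetter w j).toNat) w.length :=
    (periodic_omegaLetter w).comp Bool.toNat
  rw [sum_Ico_eq_sum_range_of_periodic hper]
  simpa only [omegaFactorAt_zero_length, zero_add] using
    (count_true_omegaFactorAt w 0 w.length).symm

theorem sum_count_true_omegaFactorAt (i n : ℕ) :
    ∑ j ∈ Ico i (i + w.length), (omegaFactorAt w j n).count true = n * w.count true := by
  calc ∑ j ∈ Ico i (i + w.length), (omegaFactorAt w j n).count true
    _ = ∑ t ∈ range n, ∑ j ∈ Ico i (i + w.length), (omegaLetter w (j + t)).toNat := by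
      simp only [count_true_omegaFactorAt]
      exact sum_comm
    _ = ∑ t ∈ range n, ∑ j ∈ Ico (i + t) (i + t + w.length), (omegaLetter w j).toNat := by
      refine sum_congr rfl fun t _ => ?_
      rw [sum_Ico_add' (fun j => (omegaLetter w j).toNat), add_right_comm]
    _ = n * w.count true := by
      simp only [sum_Ico_toNat_omegaLetter, sum_const, card_range, smul_eq_mul]

variable {w} in
theorem card_count_true_omegaFactorAt_eq_succ_add {n q : ℕ}
    (h : ∀ j, (omegaFactorAt w j n).count true = q ∨ (omegaFactorAt w j n).count true = q + 1)
    (i : ℕ) :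
    #{j ∈ Ico i (i + w.length) | (omegaFactorAt w j n).count true = q + 1} + w.length * q =
      n * w.count true := by
  rw [← sum_count_true_omegaFactorAt w i n, ← card_filter_eq_succ_add_card_mul fun j _ => h j,
    Nat.card_Ico, Nat.add_sub_cancel_left]

end OmegaWord

section Christoffel

theorem length_lowerChristoffel (a b : ℕ) : (lowerChristoffel a b).length = a + b := by
  simp only [lowerChristoffel, List.length_map, List.length_range]

variable {a b : ℕ}

theorem omegaLetter_lowerChristoffel (hab : 0 < a + b) (j : ℕ) :
    omegaLetter (lowerChristoffel a b) j =
      decide ((j + 1) * b / (a + b) ≠ j * b / (a + b)) := by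
  obtain ⟨q, r, hr, rfl⟩ : ∃ q r, r < a + b ∧ j = r + (a + b) * q :=
    ⟨j / (a + b), j % (a + b), Nat.mod_lt j hab, (Nat.mod_add_div j (a + b)).symm⟩
  have shift (x : ℕ) : (x + (a + b) * q) * b / (a + b) = x * b / (a + b) + q * b := by
    rw [add_mul, mul_assoc, Nat.add_mul_div_left _ _ hab]
  rw [add_right_comm r, shift, shift, omegaLetter, length_lowerChristoffel,
    Nat.add_mul_mod_self_left, Nat.mod_eq_of_lt hr]
  simp [lowerChristoffel, hr]

theorem floor_add_toNat_omegaLetter_lowerChristoffel (hab : 0 < a + b) (j : ℕ) :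
    j * b / (a + b) + (omegaLetter (lowerChristoffel a b) j).toNat = (j + 1) * b / (a + b) := by
  have hmono : j * b / (a + b) ≤ (j + 1) * b / (a + b) := by gcongr; omega
  have hstep : (j + 1) * b / (a + b) ≤ j * b / (a + b) + 1 := by
    rw [← Nat.add_div_right _ hab, add_one_mul]
    gcongr
    exact Nat.le_add_left b a
  rw [omegaLetter_lowerChristoffel hab]
  by_cases h : (j + 1) * b / (a + b) = j * b / (a + b)
  · simp [h]
  · simp only [ne_eq, h, not_false_eq_true, decide_true, Bool.toNat_true]
    omega

theorem floor_add_count_true_omegaFactorAt_lowerChristoffel (hab : 0 < a + b) (j n : ℕ) :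
    j * b / (a + b) + (omegaFactorAt (lowerChristoffel a b) j n).count true =
      (j + n) * b / (a + b) := by
  induction n with
  | zero => rfl
  | succ n ih =>
    rw [count_true_omegaFactorAt_succ, ← add_assoc, ih,
      floor_add_toNat_omegaLetter_lowerChristoffel hab, add_assoc]

theorem count_true_lowerChristoffel (hab : 0 < a + b) : (lowerChristoffel a b).count true = b := by
  have h := floor_add_count_true_omegaFactorAt_lowerChristoffel hab 0
    (lowerChristoffel a b).length
  rwa [omegaFactorAt_zero_length, length_lowerChristoffel, zero_mul, Nat.zero_div, zero_add,
    zero_add, Nat.mul_div_cancel_left b hab] at h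

theorem count_true_omegaFactorAt_lowerChristoffel_eq_or (hab : 0 < a + b) (j n : ℕ) :
    (omegaFactorAt (lowerChristoffel a b) j n).count true = n * b / (a + b) ∨
      (omegaFactorAt (lowerChristoffel a b) j n).count true = n * b / (a + b) + 1 := by
  have h := floor_add_count_true_omegaFactorAt_lowerChristoffel hab j n
  rw [add_mul, Nat.add_div hab] at h
  split_ifs at h <;> omega

theorem card_heavy_omegaFactorAt_lowerChristoffel (hab : 0 < a + b) (n i : ℕ) :
    #{j ∈ Ico i (i + (a + b)) |
      (omegaFactorAt (lowerChristoffel a b) j n).count true = n * b / (a + b) + 1} =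
      n * b % (a + b) := by
  have h := card_count_true_omegaFactorAt_eq_succ_add
    (fun j => count_true_omegaFactorAt_lowerChristoffel_eq_or hab j n) i
  rw [length_lowerChristoffel, count_true_lowerChristoffel hab] at h
  exact Nat.add_right_cancel (h.trans (Nat.mod_add_div (n * b) (a + b)).symm)

end Christoffel

theorem stmt10_general (α β n i : ℕ) (hαβ : 0 < α + β) :
    ((Finset.Ico i (i + α + β)).filter fun j =>
        (omegaFactorAt (lowerChristoffel α β) j n).count true = n * β / (α + β) + 1).card
      = n * β % (α + β) ∧
    ∀ u : List Bool, IsOmegaFactor u (lowerChristoffel α β) →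
      u.length = α + β + n - 1 →
      ((Finset.range (α + β)).filter fun j =>
          ((u.drop j).take n).count true = n * β / (α + β) + 1).card = n * β % (α + β) := by
  refine ⟨?_, fun u hu hlen => ?_⟩
  · rw [add_assoc]
    exact card_heavy_omegaFactorAt_lowerChristoffel hαβ n i
  · rw [← length_lowerChristoffel α β] at hlen
    obtain ⟨s, hs⟩ := hu.exists_card_filter_take_drop hlen
      fun v => v.count true = n * β / (α + β) + 1
    rw [length_lowerChristoffel] at hs
    exact hs.trans (card_heavy_omegaFactorAt_lowerChristoffel hαβ n s)

/-- For coprime positive `α, β` and any `n`, among any `α + β` consecutive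
positions of `w_{α,β}^ω`, exactly `nβ mod (α+β)` of them start a heavy factor of length `n`;
equivalently, every factor of `w_{α,β}^ω` of length `α+β+n−1` contains exactly
`nβ mod (α+β)` occurrences of heavy factors of length `n`. -/
theorem stmt10 (α β n i : ℕ) (hα : 0 < α) (hβ : 0 < β) (hab : Nat.Coprime α β) :
    ((Finset.Ico i (i + α + β)).filter fun j =>
        (omegaFactorAt (lowerChristoffel α β) j n).count true = n * β / (α + β) + 1).card
      = n * β % (α + β) ∧
    ∀ u : List Bool, IsOmegaFactor u (lowerChristoffel α β) →
      u.length = α + β + n - 1 →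
      ((Finset.range (α + β)).filter fun j =>
          ((u.drop j).take n).count true = n * β / (α + β) + 1).card = n * β % (α + β) :=
  stmt10_general α β n i (Nat.add_pos_left hα β)
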